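/- arXiv:2010.15575 — 5 statements merged into one kernel-verified Lean document; each statement's English description precedes it below -/
import Mathlib

section
/- Fix u₀ ∈ ℂ, u₀ ≠ 0, and integers (m,n) ≠ (0,0); set κ = m + nτ and κ̄ = m + nτ̄. Suppose ζ⁺, ζ⁻ ∈ ℂ are both nonzero and satisfy ζ⁺ − ζ⁻ = πκ̄/τ₂ and ζ⁺ ζ⁻ = (κ̄/κ) u₀. Then a(ζ⁺) = a(ζ⁻) and b(ζ⁺) = b(ζ⁻), where a(ζ) = exp(ζ + u₀ζ⁻¹) and b(ζ) = exp(τζ + τ̄ u₀ ζ⁻¹). In other words, the pair (ζ⁺, ζ⁻) is mapped to a double point of the Fermi curve of the constant potential u₀. -/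
open Complex

/-!
Both multipliers have the form `exp (ω ζ + ω̄ u₀ / ζ)` for a period `ω`: take `ω = 1` for `a` and
`ω = τ` for `b`. The product equation turns `ζ⁺ - ζ⁻ = π κ̄ / τ₂` into
`u₀ / ζ⁺ - u₀ / ζ⁻ = -π κ / τ₂`, so the exponent changes by
`π (ω κ̄ - ω̄ κ) / τ₂ = 2πi Im (ω κ̄) / τ₂`. As `τ₂` is the area of a fundamental cell of
`ℤ + ℤτ`, the quotient `Im (ω κ̄) / τ₂` of signed areas is an integer.
-/

open scoped ComplexConjugate

section Field

variable {K : Type*} [Field K] {x y u k k' c : K}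

lemma mul_inv_sub_mul_inv_of_sub_eq_of_mul_eq (hx : x ≠ 0) (hy : y ≠ 0)
    (hdiff : x - y = c * k') (hprod : x * y = k' / k * u) :
    u * x⁻¹ - u * y⁻¹ = -(c * k) := by
  have hne : k' / k * u ≠ 0 := hprod ▸ mul_ne_zero hx hy
  obtain ⟨⟨hk', hk⟩, hu⟩ : (k' ≠ 0 ∧ k ≠ 0) ∧ u ≠ 0 := by
    simpa only [mul_ne_zero_iff, div_ne_zero_iff] using hne
  calc u * x⁻¹ - u * y⁻¹ = -(u * (x - y) / (x * y)) := by field_simp; ring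
    _ = -(u * (c * k') / (k' / k * u)) := by rw [hdiff, hprod]
    _ = -(c * k) := by field_simp

lemma exponent_sub_exponent_of_sub_eq_of_mul_eq (hx : x ≠ 0) (hy : y ≠ 0)
    (hdiff : x - y = c * k') (hprod : x * y = k' / k * u) (w w' : K) :
    (w * x + w' * u * x⁻¹) - (w * y + w' * u * y⁻¹) = c * (w * k' - w' * k) := by
  linear_combination
    w * hdiff + w' * mul_inv_sub_mul_inv_of_sub_eq_of_mul_eq hx hy hdiff hprod

end Field

lemma re_sub_im_mul_I (z : ℂ) : (z.re : ℂ) - z.im * I = conj z := by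
  apply Complex.ext <;> simp

lemma mul_conj_sub_conj_mul (w z : ℂ) :
    w * conj z - conj w * z = 2 * ((w * conj z).im : ℂ) * I := by
  simpa using sub_conj (w * conj z)

lemma im_int_add_mul_conj_int_add (τ : ℂ) (m n p q : ℤ) :
    (((p : ℂ) + q * τ) * conj ((m : ℂ) + n * τ)).im = ((q * m - p * n : ℤ) : ℝ) * τ.im := by
  simp only [mul_im, add_re, add_im, mul_re, conj_re, conj_im, intCast_re, intCast_im]
  push_cast
  ring

/-- The Floquet multiplier, along the period `ω`, of the solution with spectral parameter `ζ` for
the constant potential `u`. The functions `a` and `b` are the cases `ω = 1` and `ω = τ`. -/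
noncomputable def floquetMultiplier (u ω ζ : ℂ) : ℂ :=
  exp (ω * ζ + conj ω * u * ζ⁻¹)

theorem double_point_of_fermi_curve_general {τ : ℂ} (hτ : τ.im ≠ 0) {u κ ζp ζm : ℂ} {m n : ℤ}
    (hκ : κ = m + n * τ) (hζp : ζp ≠ 0) (hζm : ζm ≠ 0)
    (hdiff : ζp - ζm = (Real.pi : ℂ) * conj κ / (τ.im : ℂ))
    (hprod : ζp * ζm = conj κ / κ * u) {ω : ℂ} {p q : ℤ} (hω : ω = p + q * τ) :
    floquetMultiplier u ω ζp = floquetMultiplier u ω ζm := by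
  have hτ' : (τ.im : ℂ) ≠ 0 := ofReal_ne_zero.mpr hτ
  have him : ((ω * conj κ).im : ℂ) = ((q * m - p * n : ℤ) : ℂ) * τ.im := by
    rw [hω, hκ, im_int_add_mul_conj_int_add]
    norm_cast
  refine exp_eq_exp_iff_exists_int.mpr ⟨q * m - p * n, sub_eq_iff_eq_add'.mp ?_⟩
  calc (ω * ζp + conj ω * u * ζp⁻¹) - (ω * ζm + conj ω * u * ζm⁻¹)
      = Real.pi / τ.im * (ω * conj κ - conj ω * κ) :=
        exponent_sub_exponent_of_sub_eq_of_mul_eq hζp hζm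
          (hdiff.trans (mul_div_right_comm _ _ _)) hprod _ _
    _ = Real.pi / τ.im * (2 * (((q * m - p * n : ℤ) : ℂ) * τ.im) * I) := by
        rw [mul_conj_sub_conj_mul, him]
    _ = ((q * m - p * n : ℤ) : ℂ) * (2 * Real.pi * I) := by
        field_simp

/-- if `ζ⁺, ζ⁻` are nonzero and satisfy the double-point equations
`ζ⁺ − ζ⁻ = π κ̄ / τ₂` and `ζ⁺ ζ⁻ = (κ̄/κ) u₀` (with `κ = m + nτ`, `κ̄ = m + nτ̄`,
`(m,n) ≠ (0,0)`), then the Bloch multipliers agree: `a(ζ⁺) = a(ζ⁻)` and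
`b(ζ⁺) = b(ζ⁻)`, i.e. `(ζ⁺, ζ⁻)` maps to a double point of the Fermi curve of
the constant potential `u₀`. -/
theorem double_point_of_fermi_curve (τ : ℂ) (hτ : 0 < τ.im)
    (u₀ : ℂ) (hu₀ : u₀ ≠ 0) (m n : ℤ) (hmn : (m, n) ≠ (0, 0))
    (κ κb : ℂ) (hκ : κ = (m : ℂ) + (n : ℂ) * τ)
    (hκb : κb = (m : ℂ) + (n : ℂ) * ((τ.re : ℂ) - (τ.im : ℂ) * I))
    (ζp ζm : ℂ) (hζp : ζp ≠ 0) (hζm : ζm ≠ 0)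
    (hdiff : ζp - ζm = (Real.pi : ℂ) * κb / (τ.im : ℂ))
    (hprod : ζp * ζm = (κb / κ) * u₀) :
    Complex.exp (ζp + u₀ * ζp⁻¹) = Complex.exp (ζm + u₀ * ζm⁻¹) ∧
    Complex.exp (τ * ζp + ((τ.re : ℂ) - (τ.im : ℂ) * I) * u₀ * ζp⁻¹)
      = Complex.exp (τ * ζm + ((τ.re : ℂ) - (τ.im : ℂ) * I) * u₀ * ζm⁻¹) := by
  rw [re_sub_im_mul_I] at hκb ⊢
  obtain rfl : κb = conj κ := by simp [hκ, hκb]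
  have hmult {ω : ℂ} {p q : ℤ} (hω : ω = p + q * τ) :=
    double_point_of_fermi_curve_general hτ.ne' hκ hζp hζm hdiff hprod hω
  exact ⟨by simpa [floquetMultiplier] using hmult (ω := 1) (p := 1) (q := 0) (by simp),
    hmult (ω := τ) (p := 0) (q := 1) (by simp)⟩
end

section
/- Higher-spin current: let N ≥ 1, let x : ℂ × ℂ → ℂ^N, u : ℂ × ℂ → ℂ, and v : ℂ × ℂ → ℂ be smooth with ∂_z∂_w xᵢ = u·xᵢ for each component, ∑ᵢ xᵢ² = 1 identically, ∑ᵢ (∂_z xᵢ)² = T₁ a constant, and ∂_w v = ∂_z u. Then the spin-4 current ∑ᵢ (∂_z² xᵢ)² + 2 T₁ v is independent of w, i.e. ∂_w ( ∑ᵢ (∂_z² xᵢ)² + 2 T₁ v ) = 0 identically. -/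
/-- Partial derivative with respect to the first (holomorphic) variable `z`. -/
noncomputable def pz (f : ℂ × ℂ → ℂ) : ℂ × ℂ → ℂ :=
  fun p => deriv (fun s => f (s, p.2)) p.1

/-- Partial derivative with respect to the second variable `w` (complexified `z̄`). -/
noncomputable def pw (f : ℂ × ℂ → ℂ) : ℂ × ℂ → ℂ :=
  fun p => deriv (fun s => f (p.1, s)) p.2

/-!
The argument uses only sums, products and two commuting derivations `d = ∂_z` and `d' = ∂_w`, so it
takes place in a commutative ring. Differentiating the two constraints along `d` gives
`2 ∑ xᵢ dxᵢ = 0`, `2 ∑ dxᵢ d²xᵢ = 0` and `2 ∑ xᵢ d²xᵢ = -2T`, where `T = ∑ (dxᵢ)²`.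
Since `d'(d²xᵢ) = d(u xᵢ) = u dxᵢ + xᵢ du`, the derivative `d' ∑ (d²xᵢ)²` equals `-2T du`, that is
`-2T d'v`; and `d'T = 2u ∑ xᵢ dxᵢ = 0`. The theorem is the case of analytic functions on `ℂ × ℂ`.
-/

section Derivation

variable {R A ι : Type*} [CommSemiring R] [CommRing A] [Algebra R A] [Fintype ι]

theorem derivation_sum_sq (d : Derivation R A A) (f : ι → A) :
    d (∑ i, f i ^ 2) = 2 * ∑ i, f i * d (f i) := by
  simp [Derivation.leibniz_pow, Finset.mul_sum]

theorem derivation_sum_mul (d : Derivation R A A) (f g : ι → A) :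
    d (∑ i, f i * g i) = ∑ i, f i * d (g i) + ∑ i, d (f i) * g i := by
  simp [Finset.sum_add_distrib, mul_comm (g _)]

theorem two_mul_sum_mul_derivation_derivation (d : Derivation R A A) {f : ι → A}
    (hf : d (∑ i, f i ^ 2) = 0) :
    2 * ∑ i, f i * d (d (f i)) = -2 * ∑ i, d (f i) ^ 2 := by
  have h : d (d (∑ i, f i ^ 2)) = 2 * ∑ i, f i * d (d (f i)) + 2 * ∑ i, d (f i) ^ 2 := by
    rw [derivation_sum_sq, two_mul, map_add, derivation_sum_mul]
    simp only [sq]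
    ring
  rw [hf, map_zero] at h
  linear_combination -h

variable {d d' : Derivation R A A} {x : ι → A} {u v T : A}

theorem derivation_sum_sq_derivation_eq_zero (hcomm : Function.Commute d d')
    (heq : ∀ i, d (d' (x i)) = u * x i) (hx : d (∑ i, x i ^ 2) = 0) :
    d' (∑ i, d (x i) ^ 2) = 0 := by
  have horth : 2 * ∑ i, x i * d (x i) = 0 := by rw [← derivation_sum_sq, hx]
  calc d' (∑ i, d (x i) ^ 2) = 2 * ∑ i, d (x i) * (u * x i) := by
        simp only [derivation_sum_sq, ← hcomm.eq, heq]
    _ = u * (2 * ∑ i, x i * d (x i)) := by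
        simp only [Finset.mul_sum]
        exact Finset.sum_congr rfl fun i _ => by ring
    _ = 0 := by rw [horth, mul_zero]

theorem derivation_sum_sq_derivation_derivation (hcomm : Function.Commute d d')
    (heq : ∀ i, d (d' (x i)) = u * x i) (hx : d (∑ i, x i ^ 2) = 0)
    (hdx : d (∑ i, d (x i) ^ 2) = 0) :
    d' (∑ i, d (d (x i)) ^ 2) = -2 * (∑ i, d (x i) ^ 2) * d u := by
  have hd' (i : ι) : d' (d (d (x i))) = u * d (x i) + x i * d u := by
    simp only [← hcomm.eq, heq, d.leibniz, smul_eq_mul]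
  have horth : 2 * ∑ i, d (x i) * d (d (x i)) = 0 := by rw [← derivation_sum_sq, hdx]
  calc d' (∑ i, d (d (x i)) ^ 2)
      = 2 * ∑ i, d (d (x i)) * (u * d (x i) + x i * d u) := by
        simp only [derivation_sum_sq, hd']
    _ = u * (2 * ∑ i, d (x i) * d (d (x i))) + d u * (2 * ∑ i, x i * d (d (x i))) := by
        simp only [Finset.mul_sum, ← Finset.sum_add_distrib]
        exact Finset.sum_congr rfl fun i _ => by ring
    _ = -2 * (∑ i, d (x i) ^ 2) * d u := by
        rw [horth, two_mul_sum_mul_derivation_derivation d hx]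
        ring

theorem higher_spin_current_general (hcomm : Function.Commute d d')
    (heq : ∀ i, d (d' (x i)) = u * x i) (hx : d (∑ i, x i ^ 2) = 0)
    (hT : ∑ i, d (x i) ^ 2 = T) (hdT : d T = 0) (hv : d' v = d u) :
    d' (∑ i, d (d (x i)) ^ 2 + 2 * T * v) = 0 := by
  subst hT
  rw [mul_assoc, two_mul, map_add, map_add, d'.leibniz,
    derivation_sum_sq_derivation_derivation hcomm heq hx hdT,
    derivation_sum_sq_derivation_eq_zero hcomm heq hx, hv, smul_eq_mul, smul_zero]
  ring

end Derivation

section AnalyticFunctions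

open scoped ContDiff

variable {𝕜 E : Type*} [NontriviallyNormedField 𝕜] [NormedAddCommGroup E] [NormedSpace 𝕜 E]

variable (𝕜 E) in
/-- The algebra of analytic functions on all of `E`, on which the partial derivatives are
derivations. Analyticity is encoded as `ContDiff 𝕜 ω`, the smoothness `⊤` of the theorem. -/
def analyticSubalgebra : Subalgebra 𝕜 (E → 𝕜) where
  carrier := {f | ContDiff 𝕜 ω f}
  mul_mem' {f g} (hf : ContDiff 𝕜 ω f) (hg : ContDiff 𝕜 ω g) := hf.mul hg
  add_mem' {f g} (hf : ContDiff 𝕜 ω f) (hg : ContDiff 𝕜 ω g) := hf.add hg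
  algebraMap_mem' c := show ContDiff 𝕜 ω fun _ => c from contDiff_const

namespace analyticSubalgebra

theorem contDiff_coe (f : analyticSubalgebra 𝕜 E) : ContDiff 𝕜 ω (f : E → 𝕜) :=
  f.2

theorem differentiable_coe (f : analyticSubalgebra 𝕜 E) : Differentiable 𝕜 (f : E → 𝕜) :=
  (contDiff_coe f).differentiable (by simp)

theorem contDiff_fderiv_coe (f : analyticSubalgebra 𝕜 E) :
    ContDiff 𝕜 ω (fderiv 𝕜 (f : E → 𝕜)) :=
  (contDiff_coe f).fderiv_right le_top

end analyticSubalgebra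

open analyticSubalgebra

variable (𝕜) in
/-- The derivative in the direction `e`, as a derivation of the algebra of analytic functions
on `E`. -/
noncomputable def directionalDerivation (e : E) :
    Derivation 𝕜 (analyticSubalgebra 𝕜 E) (analyticSubalgebra 𝕜 E) :=
  Derivation.mk'
    { toFun f := ⟨fun p => fderiv 𝕜 (f : E → 𝕜) p e,
        (contDiff_fderiv_coe f).clm_apply contDiff_const⟩
      map_add' f g := Subtype.ext <| funext fun p =>
        DFunLike.congr_fun (fderiv_add (differentiable_coe f p) (differentiable_coe g p)) e
      map_smul' c f := Subtype.ext <| funext fun p =>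
        DFunLike.congr_fun (fderiv_const_smul (differentiable_coe f p) c) e }
    fun f g => Subtype.ext <| funext fun p =>
      DFunLike.congr_fun (fderiv_mul (differentiable_coe f p) (differentiable_coe g p)) e

theorem coe_directionalDerivation (e : E) (f : analyticSubalgebra 𝕜 E) :
    (directionalDerivation 𝕜 e f : E → 𝕜) = fun p => fderiv 𝕜 f p e :=
  rfl

theorem directionalDerivation_directionalDerivation_apply (a b : E) (f : analyticSubalgebra 𝕜 E)
    (p : E) :
    (directionalDerivation 𝕜 a (directionalDerivation 𝕜 b f) : E → 𝕜) p =
      fderiv 𝕜 (fderiv 𝕜 f) p a b := by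
  have hdiff : DifferentiableAt 𝕜 (fderiv 𝕜 (f : E → 𝕜)) p :=
    (contDiff_fderiv_coe f).differentiable (by simp) p
  simp [coe_directionalDerivation, fderiv_clm_apply hdiff (differentiableAt_const b)]

theorem commute_directionalDerivation (a b : E) :
    Function.Commute (directionalDerivation 𝕜 a) (directionalDerivation 𝕜 b) := by
  intro f
  ext p
  rw [directionalDerivation_directionalDerivation_apply,
    directionalDerivation_directionalDerivation_apply]
  exact (contDiff_coe f).contDiffAt.isSymmSndFDerivAt_of_omega.eq a b

theorem pz_eq_directionalDerivation (f : analyticSubalgebra ℂ (ℂ × ℂ)) :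
    pz f = directionalDerivation ℂ (1, 0) f := by
  ext p
  exact ((differentiable_coe f p).hasFDerivAt.comp_hasDerivAt p.1
    ((hasDerivAt_id p.1).prodMk (hasDerivAt_const p.1 p.2))).deriv

theorem pw_eq_directionalDerivation (f : analyticSubalgebra ℂ (ℂ × ℂ)) :
    pw f = directionalDerivation ℂ (0, 1) f := by
  ext p
  exact ((differentiable_coe f p).hasFDerivAt.comp_hasDerivAt p.2
    ((hasDerivAt_const p.2 p.1).prodMk (hasDerivAt_id p.2))).deriv

end AnalyticFunctions

/-- the higher-spin current.  If each component of `x` solves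
`∂_z∂_w xᵢ = u xᵢ`, `∑ᵢ xᵢ² = 1` identically, `∑ᵢ (∂_z xᵢ)² = T₁` is constant,
and `∂_w v = ∂_z u`, then the spin-4 current `∑ᵢ (∂_z² xᵢ)² + 2 T₁ v` is
independent of `w`. -/
theorem higher_spin_current (N : ℕ) (hN : 1 ≤ N)
    (x : Fin N → ℂ × ℂ → ℂ) (u v : ℂ × ℂ → ℂ) (T₁ : ℂ)
    (hx : ∀ i, ContDiff ℂ ⊤ (x i)) (hu : ContDiff ℂ ⊤ u) (hv : ContDiff ℂ ⊤ v)
    (hxsymm : ∀ i p, pz (pw (x i)) p = pw (pz (x i)) p)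
    (heq : ∀ i p, pz (pw (x i)) p = u p * x i p)
    (hconstraint : ∀ p, ∑ i, (x i p) ^ 2 = 1)
    (hT₁ : ∀ p, ∑ i, (pz (x i) p) ^ 2 = T₁)
    (hveq : ∀ p, pw v p = pz u p) :
    ∀ p, pw (fun q => (∑ i, (pz (pz (x i)) q) ^ 2) + 2 * T₁ * v q) p = 0 := by
  lift x to Fin N → analyticSubalgebra ℂ (ℂ × ℂ) using hx
  lift u to analyticSubalgebra ℂ (ℂ × ℂ) using hu
  lift v to analyticSubalgebra ℂ (ℂ × ℂ) using hv
  simp only [pz_eq_directionalDerivation, pw_eq_directionalDerivation] at heq hT₁ hveq ⊢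
  set dz := directionalDerivation ℂ ((1, 0) : ℂ × ℂ)
  set dw := directionalDerivation ℂ ((0, 1) : ℂ × ℂ)
  have hsphere : ∑ i, x i ^ 2 = 1 := by
    ext p
    simpa using hconstraint p
  have hdx : ∑ i, dz (x i) ^ 2 = algebraMap ℂ _ T₁ := by
    ext p
    simpa using hT₁ p
  have hcurrent : (fun q => ∑ i, (dz (dz (x i))).1 q ^ 2 + 2 * T₁ * v.1 q) =
      (∑ i, dz (dz (x i)) ^ 2 + 2 * algebraMap ℂ _ T₁ * v : analyticSubalgebra ℂ (ℂ × ℂ)) := by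
    ext q
    simp [two_mul]
  have h : dw (∑ i, dz (dz (x i)) ^ 2 + 2 * algebraMap ℂ _ T₁ * v) = 0 :=
    higher_spin_current_general (commute_directionalDerivation (1, 0) (0, 1))
      (fun i => Subtype.ext (funext (heq i))) (by rw [hsphere, dz.map_one_eq_zero])
      hdx (dz.map_algebraMap T₁) (Subtype.ext (funext hveq))
  rw [hcurrent, pw_eq_directionalDerivation, h]
  exact fun _ => rfl
end

section
/- Winding ansatz reduction of the O(N) model to the generalized Neumann system: let τ ∈ ℂ with τ₁ = Re τ, τ₂ = Im τ, τ̄ = τ₁ − iτ₂; let θ ∈ ℂ^N, let f, f^σ : ℝ → ℂ^N be twice continuously differentiable and u : ℝ → ℂ, and suppose the generalized Neumann equations hold: f̈ᵢ = (ττ̄θᵢ² − u)fᵢ + 2iτ₁θᵢḟᵢ and f̈^σᵢ = (ττ̄θᵢ² − u)f^σᵢ − 2iτ₁θᵢḟ^σᵢ (dots denote d/dy). Then the winding-ansatz fields ψᵢ(x,y) = e^{iθᵢ x} fᵢ(y) and ψ^σᵢ(x,y) = f^σᵢ(y) e^{−iθᵢ x} satisfy the second-order equations (τ̄∂_x − ∂_y)(τ∂_x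 − ∂_y)ψᵢ = −u·ψᵢ and (τ̄∂_x − ∂_y)(τ∂_x − ∂_y)ψ^σᵢ = −u·ψ^σᵢ for all (x,y) ∈ ℝ². -/
open Complex

/-- Partial derivative in the first real coordinate `x` of a function on `ℝ²`. -/
noncomputable def px (f : ℝ × ℝ → ℂ) : ℝ × ℝ → ℂ :=
  fun p => deriv (fun s => f (s, p.2)) p.1

/-- Partial derivative in the second real coordinate `y` of a function on `ℝ²`. -/
noncomputable def py (f : ℝ × ℝ → ℂ) : ℝ × ℝ → ℂ :=
  fun p => deriv (fun s => f (p.1, s)) p.2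

/-- The first-order operator `c ∂_x − ∂_y`. -/
noncomputable def Lop (c : ℂ) (f : ℝ × ℝ → ℂ) : ℝ × ℝ → ℂ :=
  fun p => c * px f p - py f p

/-!
On `e^{iθx} g(y)` the operator `∂_x` acts as multiplication by `iθ`, so `c ∂_x − ∂_y` acts on `g`
as `iθc − d/dy`. Composing two such operators turns the field equation into a second-order ODE
for `g`, multiplied by the nowhere vanishing factor `e^{iθx}`.
-/

/-- One component `ψ(x, y) = e^{iθx} f(y)` of the winding-ansatz field. The dual component
`ψ^σ(x, y) = f^σ(y) e^{-iθx}` is encoded as the field of `-θ` and `f^σ`, so that a single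
computation covers both. -/
noncomputable def windingField (θ : ℂ) (f : ℝ → ℂ) : ℝ × ℝ → ℂ :=
  fun q => exp (I * θ * (q.1 : ℂ)) * f q.2

section WindingField

variable (c d θ : ℂ) (f : ℝ → ℂ)

theorem windingField_neg :
    windingField (-θ) f = fun q => f q.2 * exp (-(I * θ * (q.1 : ℂ))) := by
  funext q
  simp only [windingField, mul_neg, neg_mul, mul_comm (f q.2)]

theorem px_windingField : px (windingField θ f) = windingField θ (fun y => I * θ * f y) := by
  funext q
  have hexp : HasDerivAt (fun x : ℝ => exp (I * θ * (x : ℂ)))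
      (exp (I * θ * (q.1 : ℂ)) * (I * θ * 1)) q.1 :=
    ((ofRealCLM.hasDerivAt (x := q.1)).const_mul (I * θ)).cexp
  simp only [px, windingField]
  rw [(hexp.mul_const (f q.2)).deriv, mul_one, mul_assoc]

theorem py_windingField : py (windingField θ f) = windingField θ (deriv f) :=
  funext fun q => deriv_const_mul_field (exp (I * θ * (q.1 : ℂ)))

theorem Lop_windingField :
    Lop c (windingField θ f) = windingField θ (fun y => c * (I * θ) * f y - deriv f y) := by
  funext q
  simp only [Lop, px_windingField, py_windingField, windingField]
  ring

variable {f} {p : ℝ × ℝ}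

theorem Lop_Lop_windingField (hf : DifferentiableAt ℝ f p.2)
    (hf' : DifferentiableAt ℝ (deriv f) p.2) :
    Lop d (Lop c (windingField θ f)) p = exp (I * θ * (p.1 : ℂ)) *
      (deriv (deriv f) p.2 - (c * d * θ ^ 2 * f p.2 + I * (c + d) * θ * deriv f p.2)) := by
  have hderiv : deriv (fun y => c * (I * θ) * f y - deriv f y) p.2
      = c * (I * θ) * deriv f p.2 - deriv (deriv f) p.2 :=
    ((hf.hasDerivAt.const_mul _).sub hf'.hasDerivAt).deriv
  simp only [Lop_windingField, windingField, hderiv]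
  linear_combination exp (I * θ * (p.1 : ℂ)) * c * d * θ ^ 2 * f p.2 * I_sq

theorem Lop_Lop_windingField_eq_neg_mul_iff (v : ℂ) (hf : DifferentiableAt ℝ f p.2)
    (hf' : DifferentiableAt ℝ (deriv f) p.2) :
    Lop d (Lop c (windingField θ f)) p = -v * windingField θ f p ↔
      deriv (deriv f) p.2 = (c * d * θ ^ 2 - v) * f p.2 + I * (c + d) * θ * deriv f p.2 := by
  rw [Lop_Lop_windingField c d θ hf hf', windingField, mul_left_comm,
    mul_right_inj' (exp_ne_zero _), sub_eq_iff_eq_add]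
  ring_nf

theorem Lop_Lop_windingField_neg_eq_neg_mul_iff (v : ℂ) (hf : DifferentiableAt ℝ f p.2)
    (hf' : DifferentiableAt ℝ (deriv f) p.2) :
    Lop d (Lop c (windingField (-θ) f)) p = -v * windingField (-θ) f p ↔
      deriv (deriv f) p.2 = (c * d * θ ^ 2 - v) * f p.2 - I * (c + d) * θ * deriv f p.2 := by
  rw [Lop_Lop_windingField_eq_neg_mul_iff c d (-θ) v hf hf', neg_sq, mul_neg, neg_mul,
    ← sub_eq_add_neg]

end WindingField

theorem add_re_sub_im_mul_I (z : ℂ) : z + ((z.re : ℂ) - (z.im : ℂ) * I) = 2 * (z.re : ℂ) := by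
  linear_combination -re_add_im z

theorem winding_ansatz_neumann_general {ι : Type*} (c d : ℂ) (θ : ι → ℂ) (f fσ : ι → ℝ → ℂ)
    (u : ℝ → ℂ) (hf : ∀ i, Differentiable ℝ (f i)) (hf' : ∀ i, Differentiable ℝ (deriv (f i)))
    (hfσ : ∀ i, Differentiable ℝ (fσ i)) (hfσ' : ∀ i, Differentiable ℝ (deriv (fσ i))) :
    (∀ i (p : ℝ × ℝ),
      Lop d (Lop c (fun q => exp (I * θ i * (q.1 : ℂ)) * f i q.2)) p
        = -(u p.2) * (exp (I * θ i * (p.1 : ℂ)) * f i p.2) ∧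
      Lop d (Lop c (fun q => fσ i q.2 * exp (-(I * θ i * (q.1 : ℂ))))) p
        = -(u p.2) * (fσ i p.2 * exp (-(I * θ i * (p.1 : ℂ))))) ↔
    ∀ i y,
      deriv (deriv (f i)) y
        = (c * d * θ i ^ 2 - u y) * f i y + I * (c + d) * θ i * deriv (f i) y ∧
      deriv (deriv (fσ i)) y
        = (c * d * θ i ^ 2 - u y) * fσ i y - I * (c + d) * θ i * deriv (fσ i) y := by
  have hψ (i) (p : ℝ × ℝ) :=
    Lop_Lop_windingField_eq_neg_mul_iff c d (θ i) (u p.2) (hf i p.2) (hf' i p.2)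
  have hψσ (i) (p : ℝ × ℝ) :=
    Lop_Lop_windingField_neg_eq_neg_mul_iff c d (θ i) (u p.2) (hfσ i p.2) (hfσ' i p.2)
  simp only [windingField_neg] at hψσ
  exact ⟨fun h i y => ⟨(hψ i (0, y)).1 (h i (0, y)).1, (hψσ i (0, y)).1 (h i (0, y)).2⟩,
    fun h i p => ⟨(hψ i p).2 (h i p.2).1, (hψσ i p).2 (h i p.2).2⟩⟩

/-- winding ansatz reduction of the `O(N)` model to the generalized
Neumann system.  If `f, f^σ` solve the generalized Neumann equations, then the
winding-ansatz fields `ψᵢ(x,y) = e^{iθᵢx} fᵢ(y)` and `ψ^σᵢ(x,y) = f^σᵢ(y) e^{−iθᵢx}`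
satisfy `(τ̄∂_x − ∂_y)(τ∂_x − ∂_y)ψᵢ = −u ψᵢ` and the same equation for `ψ^σᵢ`. -/
theorem winding_ansatz_neumann (N : ℕ) (τ : ℂ) (θ : Fin N → ℂ)
    (f fσ : Fin N → ℝ → ℂ) (u : ℝ → ℂ)
    (hf : ∀ i, ContDiff ℝ 2 (f i)) (hfσ : ∀ i, ContDiff ℝ 2 (fσ i))
    (heqf : ∀ i y, deriv (deriv (f i)) y
      = (τ * ((τ.re : ℂ) - (τ.im : ℂ) * I) * (θ i) ^ 2 - u y) * f i y
        + 2 * I * (τ.re : ℂ) * θ i * deriv (f i) y)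
    (heqfσ : ∀ i y, deriv (deriv (fσ i)) y
      = (τ * ((τ.re : ℂ) - (τ.im : ℂ) * I) * (θ i) ^ 2 - u y) * fσ i y
        - 2 * I * (τ.re : ℂ) * θ i * deriv (fσ i) y) :
    ∀ i (p : ℝ × ℝ),
      Lop ((τ.re : ℂ) - (τ.im : ℂ) * I)
          (Lop τ (fun q => Complex.exp (I * θ i * (q.1 : ℂ)) * f i q.2)) p
        = -(u p.2) * (Complex.exp (I * θ i * (p.1 : ℂ)) * f i p.2) ∧
      Lop ((τ.re : ℂ) - (τ.im : ℂ) * I)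
          (Lop τ (fun q => fσ i q.2 * Complex.exp (-(I * θ i * (q.1 : ℂ))))) p
        = -(u p.2) * (fσ i p.2 * Complex.exp (-(I * θ i * (p.1 : ℂ)))) := by
  refine (winding_ansatz_neumann_general τ _ θ f fσ u (fun i => (hf i).differentiable two_ne_zero)
    (fun i => (hf i).differentiable_deriv_two) (fun i => (hfσ i).differentiable two_ne_zero)
    (fun i => (hfσ i).differentiable_deriv_two)).2 fun i y => ?_
  simp only [heqf, heqfσ, add_re_sub_im_mul_I, mul_left_comm I, mul_assoc, and_self]
end

section
/- Winding ansatz identification of the self-consistent potential: let τ ∈ ℂ with τ₁ = Re τ, τ₂ = Im τ ≠ 0, τ̄ = τ₁ − iτ₂; let θ ∈ ℂ^N and let f, f^σ : ℝ → ℂ^N be continuously differentiable. Define ψᵢ(x,y) = e^{iθᵢ x} fᵢ(y), ψ^σᵢ(x,y) = f^σᵢ(y) e^{−iθᵢ x}, and the Wirtinger-type operators ∂_z = (τ̄∂_x − ∂_y)/(τ̄ − τ), ∂_w = (τ∂_x − ∂_y)/(τ − τ̄). Then for every (x,y) the identity −½ ∑ᵢ ( ∂_zψ^σᵢ · ∂_wψᵢ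 + ∂_wψ^σᵢ · ∂_zψᵢ ) = −u(y)/(4τ₂²) holds, where u(y) = iτ₁ ∑ᵢ θᵢ ( f^σᵢ ḟᵢ − ḟ^σᵢ fᵢ ) + ττ̄ ∑ᵢ θᵢ² f^σᵢ fᵢ + ∑ᵢ ḟ^σᵢ ḟᵢ. -/
open Complex

/-- The Wirtinger-type operator `∂_z = (τ̄∂_x − ∂_y)/(τ̄ − τ)`. -/
noncomputable def Dz (τ τb : ℂ) (f : ℝ × ℝ → ℂ) : ℝ × ℝ → ℂ :=
  fun p => (τb * px f p - py f p) / (τb - τ)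

/-- The Wirtinger-type operator `∂_w = (τ∂_x − ∂_y)/(τ − τ̄)`. -/
noncomputable def Dw (τ τb : ℂ) (f : ℝ × ℝ → ℂ) : ℝ × ℝ → ℂ :=
  fun p => (τ * px f p - py f p) / (τ - τb)

/-!
In real coordinates `-½ (∂_z φ ∂_w ψ + ∂_w φ ∂_z ψ)` is the symmetric bilinear form
`(ττ̄ φ_x ψ_x - ½(τ + τ̄) (φ_x ψ_y + φ_y ψ_x) + φ_y ψ_y) / (τ - τ̄)²`. On a winding mode `∂_x`
acts as multiplication by `±iθ`, and the exponentials of `ψ` and `ψ^σ` are mutually inverse, so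
only a function of `y` survives.
-/

section WindingModes

variable {κ τ τb : ℂ} {f g : ℝ → ℂ} {f' g' : ℂ} {p : ℝ × ℝ}

theorem hasDerivAt_exp_mul_ofReal (κ : ℂ) (x : ℝ) :
    HasDerivAt (fun s : ℝ => exp (κ * s)) (κ * exp (κ * x)) x := by
  simpa only [id_eq, mul_one, mul_comm (exp _)] using
    ((hasDerivAt_id (x : ℂ)).const_mul κ).cexp.comp_ofReal

theorem px_exp_mul (κ : ℂ) (f : ℝ → ℂ) (p : ℝ × ℝ) :
    px (fun q => exp (κ * q.1) * f q.2) p = κ * exp (κ * p.1) * f p.2 :=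
  ((hasDerivAt_exp_mul_ofReal κ p.1).mul_const (f p.2)).deriv

theorem py_exp_mul (κ : ℂ) (hf : HasDerivAt f f' p.2) :
    py (fun q => exp (κ * q.1) * f q.2) p = exp (κ * p.1) * f' :=
  (hf.const_mul (exp (κ * p.1))).deriv

theorem Dz_mul_Dw_add_Dw_mul_Dz (hτ : τ ≠ τb) (φ ψ : ℝ × ℝ → ℂ) (p : ℝ × ℝ) :
    Dz τ τb φ p * Dw τ τb ψ p + Dw τ τb φ p * Dz τ τb ψ p =
      -(2 * (τ * τb) * (px φ p * px ψ p) - (τ + τb) * (px φ p * py ψ p + py φ p * px ψ p)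
        + 2 * (py φ p * py ψ p)) / (τ - τb) ^ 2 := by
  have hsub : τ - τb ≠ 0 := sub_ne_zero.mpr hτ
  rw [Dz, Dw, Dw, Dz, ← neg_sub τ τb]
  field_simp
  ring

theorem Dz_mul_Dw_add_Dw_mul_Dz_winding (hτ : τ ≠ τb)
    (hf : HasDerivAt f f' p.2) (hg : HasDerivAt g g' p.2) :
    Dz τ τb (fun q => g q.2 * exp (-(κ * q.1))) p * Dw τ τb (fun q => exp (κ * q.1) * f q.2) p
        + Dw τ τb (fun q => g q.2 * exp (-(κ * q.1))) p
          * Dz τ τb (fun q => exp (κ * q.1) * f q.2) p =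
      -((τ + τb) * κ * (g p.2 * f' - g' * f p.2) - 2 * (τ * τb) * (κ ^ 2 * g p.2 * f p.2)
        + 2 * (g' * f')) / (τ - τb) ^ 2 := by
  have hexp : exp (-κ * p.1) * exp (κ * p.1) = 1 := by
    rw [← exp_add, neg_mul, neg_add_cancel, exp_zero]
  simp only [mul_comm (g _), ← neg_mul]
  rw [Dz_mul_Dw_add_Dw_mul_Dz hτ, px_exp_mul, px_exp_mul, py_exp_mul _ hf, py_exp_mul _ hg]
  congr 1
  linear_combination
    -((τ + τb) * κ * (g p.2 * f' - g' * f p.2) - 2 * (τ * τb) * (κ ^ 2 * g p.2 * f p.2)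
      + 2 * (g' * f')) * hexp

end WindingModes

/-- `τ` and `τ̄` are here the independent complex numbers `τ₁ ± iτ₂`. -/
theorem winding_ansatz_potential_general {ι : Type*} (s : Finset ι) {τ₁ τ₂ : ℂ} (hτ₂ : τ₂ ≠ 0)
    (θ : ι → ℂ) {f fσ : ι → ℝ → ℂ} {f' fσ' : ι → ℂ} {p : ℝ × ℝ}
    (hf : ∀ i ∈ s, HasDerivAt (f i) (f' i) p.2)
    (hfσ : ∀ i ∈ s, HasDerivAt (fσ i) (fσ' i) p.2) :
    -(1/2) * ∑ i ∈ s,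
      (Dz (τ₁ + τ₂ * I) (τ₁ - τ₂ * I) (fun q => fσ i q.2 * exp (-(I * θ i * q.1))) p
        * Dw (τ₁ + τ₂ * I) (τ₁ - τ₂ * I) (fun q => exp (I * θ i * q.1) * f i q.2) p
      + Dw (τ₁ + τ₂ * I) (τ₁ - τ₂ * I) (fun q => fσ i q.2 * exp (-(I * θ i * q.1))) p
        * Dz (τ₁ + τ₂ * I) (τ₁ - τ₂ * I) (fun q => exp (I * θ i * q.1) * f i q.2) p)
    = -(I * τ₁ * (∑ i ∈ s, θ i * (fσ i p.2 * f' i - fσ' i * f i p.2))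
        + (τ₁ + τ₂ * I) * (τ₁ - τ₂ * I) * (∑ i ∈ s, θ i ^ 2 * fσ i p.2 * f i p.2)
        + ∑ i ∈ s, fσ' i * f' i)
      / (4 * τ₂ ^ 2) := by
  have hsub : τ₁ + τ₂ * I - (τ₁ - τ₂ * I) = 2 * τ₂ * I := by ring
  have hne : τ₁ + τ₂ * I ≠ τ₁ - τ₂ * I := by
    rw [← sub_ne_zero, hsub]
    exact mul_ne_zero (mul_ne_zero two_ne_zero hτ₂) I_ne_zero
  have hden : (2 * τ₂ * I) ^ 2 = -(4 * τ₂ ^ 2) := by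
    rw [mul_pow, I_sq]
    ring
  simp only [Finset.mul_sum, ← Finset.sum_add_distrib, ← Finset.sum_neg_distrib, Finset.sum_div]
  refine Finset.sum_congr rfl fun i hi => ?_
  rw [Dz_mul_Dw_add_Dw_mul_Dz_winding hne (hf i hi) (hfσ i hi), hsub, hden, mul_pow I, I_sq]
  ring

/-- winding ansatz identification of the self-consistent potential:
for the fields `ψᵢ(x,y) = e^{iθᵢx} fᵢ(y)`, `ψ^σᵢ(x,y) = f^σᵢ(y)e^{−iθᵢx}` one has
`−½ ∑ᵢ (∂_zψ^σᵢ ∂_wψᵢ + ∂_wψ^σᵢ ∂_zψᵢ) = −u(y)/(4τ₂²)`, where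
`u(y) = iτ₁ ∑ᵢ θᵢ(f^σᵢ ḟᵢ − ḟ^σᵢ fᵢ) + ττ̄ ∑ᵢ θᵢ² f^σᵢ fᵢ + ∑ᵢ ḟ^σᵢ ḟᵢ`. -/
theorem winding_ansatz_potential (N : ℕ) (τ : ℂ) (hτ : τ.im ≠ 0)
    (θ : Fin N → ℂ) (f fσ : Fin N → ℝ → ℂ)
    (hf : ∀ i, ContDiff ℝ 1 (f i)) (hfσ : ∀ i, ContDiff ℝ 1 (fσ i)) :
    ∀ p : ℝ × ℝ,
      -(1/2) * ∑ i,
        (Dz τ ((τ.re : ℂ) - (τ.im : ℂ) * I)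
            (fun q => fσ i q.2 * Complex.exp (-(I * θ i * (q.1 : ℂ)))) p
          * Dw τ ((τ.re : ℂ) - (τ.im : ℂ) * I)
            (fun q => Complex.exp (I * θ i * (q.1 : ℂ)) * f i q.2) p
        + Dw τ ((τ.re : ℂ) - (τ.im : ℂ) * I)
            (fun q => fσ i q.2 * Complex.exp (-(I * θ i * (q.1 : ℂ)))) p
          * Dz τ ((τ.re : ℂ) - (τ.im : ℂ) * I)
            (fun q => Complex.exp (I * θ i * (q.1 : ℂ)) * f i q.2) p)
      = -(I * (τ.re : ℂ) * (∑ i, θ i * (fσ i p.2 * deriv (f i) p.2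
              - deriv (fσ i) p.2 * f i p.2))
          + τ * ((τ.re : ℂ) - (τ.im : ℂ) * I) * (∑ i, (θ i) ^ 2 * fσ i p.2 * f i p.2)
          + ∑ i, deriv (fσ i) p.2 * deriv (f i) p.2)
        / (4 * (τ.im : ℂ) ^ 2) := by
  intro p
  simpa only [re_add_im] using
    winding_ansatz_potential_general Finset.univ (τ₁ := τ.re) (ofReal_ne_zero.mpr hτ) θ
      (fun i _ => ((hf i).differentiable one_ne_zero p.2).hasDerivAt)
      (fun i _ => ((hfσ i).differentiable one_ne_zero p.2).hasDerivAt)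
end

section
/- Conservation of the current in the generalized Neumann system: let τ ∈ ℂ with τ₁ = Re τ, τ̄ = Re τ − i·Im τ; let θ ∈ ℂ^N, let f, f^σ : ℝ → ℂ^N be twice continuously differentiable and u : ℝ → ℂ, satisfying f̈ᵢ = (ττ̄θᵢ² − u)fᵢ + 2iτ₁θᵢḟᵢ and f̈^σᵢ = (ττ̄θᵢ² − u)f^σᵢ − 2iτ₁θᵢḟ^σᵢ (dots denote d/dy). Then for every z ∈ ℂ with z + θᵢ ≠ 0 for all i, the U(1) current 𝒥(z) = ∑ᵢ (z + θᵢ)⁻¹ [ ½( ḟ^σᵢ fᵢ − f^σᵢ ḟᵢ ) + iτ₁ θᵢ f^σᵢ fᵢ ] is conserved: d𝒥(z)/dy = 0 for all y. -/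
open Complex

/-!
The equations for `fᵢ` and `f^σᵢ` read `L f = 0` and `L* g = 0` for a second-order operator
`L` and its formal adjoint `L*`: the potential `ττ̄θᵢ² - u` is common to both, and the damping
coefficient `2iτ₁θᵢ` changes sign. By Lagrange's identity, `(L* g) f - g (L f)` is the derivative
of a bilinear expression in `f`, `g` and their first derivatives, which is therefore conserved
along a pair of solutions. The current is a linear combination of these expressions.
-/

section Lagrange

variable {𝕜 A : Type*} [NontriviallyNormedField 𝕜] [NormedCommRing A] [NormedAlgebra 𝕜 A]

/-- Lagrange's bilinear concomitant of the operator `L f = f'' - p f' - q f` and its formal adjoint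
`L* g = g'' + (p g)' - q g`, whose derivative measures the failure of `L` and `L*` to be adjoint
pointwise. It does not depend on `q`; the sign is chosen so that `p g f` enters positively. -/
noncomputable def bilinearConcomitant (p f g : 𝕜 → A) (y : 𝕜) : A :=
  deriv g y * f y - g y * deriv f y + p y * g y * f y

variable {p f g : 𝕜 → A} {p' f'' g'' : A} {y : 𝕜}

theorem hasDerivAt_bilinearConcomitant (hp : HasDerivAt p p' y)
    (hf : DifferentiableAt 𝕜 f y) (hf'' : HasDerivAt (deriv f) f'' y)
    (hg : DifferentiableAt 𝕜 g y) (hg'' : HasDerivAt (deriv g) g'' y) :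
    HasDerivAt (bilinearConcomitant p f g)
      ((g'' + (p' * g y + p y * deriv g y)) * f y - g y * (f'' - p y * deriv f y)) y := by
  have h_wronskian := (hg''.mul hf.hasDerivAt).sub (hg.hasDerivAt.mul hf'')
  have h_damping := (hp.mul hg.hasDerivAt).mul hf.hasDerivAt
  refine (h_wronskian.add h_damping).congr_deriv ?_
  simp only [Pi.mul_apply]
  ring

theorem hasDerivAt_bilinearConcomitant_zero {q : A} (hp : HasDerivAt p p' y)
    (hf : DifferentiableAt 𝕜 f y)
    (hLf : HasDerivAt (deriv f) (q * f y + p y * deriv f y) y)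
    (hg : DifferentiableAt 𝕜 g y)
    (hLg : HasDerivAt (deriv g) (q * g y - (p' * g y + p y * deriv g y)) y) :
    HasDerivAt (bilinearConcomitant p f g) 0 y :=
  (hasDerivAt_bilinearConcomitant hp hf hLf hg hLg).congr_deriv (by ring)

end Lagrange

section Neumann

variable {𝕜 A : Type*} [NontriviallyNormedField 𝕜] [NormedField A] [NormedAlgebra 𝕜 A]
  [NeZero (2 : A)]

theorem half_mul_bilinearConcomitant_two_mul (c f g : 𝕜 → A) (y : 𝕜) :
    1 / 2 * bilinearConcomitant (fun x => 2 * c x) f g y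
      = (1 / 2) * (deriv g y * f y - g y * deriv f y) + c y * g y * f y := by
  simp only [bilinearConcomitant]
  field_simp

theorem neumann_current_conserved_general {ι : Type*} (s : Finset ι) (w : ι → A)
    {c f g : ι → 𝕜 → A} {c' q : ι → A} {y : 𝕜}
    (hc : ∀ i ∈ s, HasDerivAt (c i) (c' i) y)
    (hf : ∀ i ∈ s, DifferentiableAt 𝕜 (f i) y)
    (hf' : ∀ i ∈ s, DifferentiableAt 𝕜 (deriv (f i)) y)
    (hg : ∀ i ∈ s, DifferentiableAt 𝕜 (g i) y)
    (hg' : ∀ i ∈ s, DifferentiableAt 𝕜 (deriv (g i)) y)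
    (heqf : ∀ i ∈ s, deriv (deriv (f i)) y = q i * f i y + 2 * c i y * deriv (f i) y)
    (heqg : ∀ i ∈ s, deriv (deriv (g i)) y
      = q i * g i y - (2 * c' i * g i y + 2 * c i y * deriv (g i) y)) :
    HasDerivAt (fun x => ∑ i ∈ s, w i *
      ((1 / 2) * (deriv (g i) x * f i x - g i x * deriv (f i) x)
        + c i x * g i x * f i x)) 0 y := by
  simp only [← half_mul_bilinearConcomitant_two_mul]
  have h_term : ∀ i ∈ s, HasDerivAt
      (fun x => w i * (1 / 2 * bilinearConcomitant (fun t => 2 * c i t) (f i) (g i) x)) 0 y := by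
    intro i hi
    have h_concomitant := hasDerivAt_bilinearConcomitant_zero ((hc i hi).const_mul 2)
      (hf i hi) ((hf' i hi).hasDerivAt.congr_deriv (heqf i hi))
      (hg i hi) ((hg' i hi).hasDerivAt.congr_deriv (heqg i hi))
    simpa only [mul_zero] using (h_concomitant.const_mul (1 / 2)).const_mul (w i)
  simpa only [Finset.sum_const_zero] using HasDerivAt.fun_sum h_term

end Neumann

/-- conservation of the `U(1)` current in the generalized Neumann
system.  If `f, f^σ` solve the generalized Neumann equations, then for every
`z` with `z + θᵢ ≠ 0` for all `i`, the current
`𝒥(z) = ∑ᵢ (z+θᵢ)⁻¹ [½(ḟ^σᵢ fᵢ − f^σᵢ ḟᵢ) + iτ₁θᵢ f^σᵢ fᵢ]` is conserved in `y`. -/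
theorem neumann_current_conserved (N : ℕ) (τ : ℂ) (θ : Fin N → ℂ)
    (f fσ : Fin N → ℝ → ℂ) (u : ℝ → ℂ)
    (hf : ∀ i, ContDiff ℝ 2 (f i)) (hfσ : ∀ i, ContDiff ℝ 2 (fσ i))
    (heqf : ∀ i y, deriv (deriv (f i)) y
      = (τ * ((τ.re : ℂ) - (τ.im : ℂ) * I) * (θ i) ^ 2 - u y) * f i y
        + 2 * I * (τ.re : ℂ) * θ i * deriv (f i) y)
    (heqfσ : ∀ i y, deriv (deriv (fσ i)) y
      = (τ * ((τ.re : ℂ) - (τ.im : ℂ) * I) * (θ i) ^ 2 - u y) * fσ i y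
        - 2 * I * (τ.re : ℂ) * θ i * deriv (fσ i) y) :
    ∀ z : ℂ, (∀ i, z + θ i ≠ 0) → ∀ y : ℝ,
      deriv (fun s => ∑ i, (z + θ i)⁻¹ *
        ((1/2) * (deriv (fσ i) s * f i s - fσ i s * deriv (f i) s)
          + I * (τ.re : ℂ) * θ i * fσ i s * f i s)) y = 0 := by
  intro z _ y
  exact (neumann_current_conserved_general Finset.univ (fun i => (z + θ i)⁻¹)
    (q := fun i => τ * ((τ.re : ℂ) - (τ.im : ℂ) * I) * θ i ^ 2 - u y)
    (fun i _ => hasDerivAt_const y (I * (τ.re : ℂ) * θ i))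
    (fun i _ => (hf i).differentiable two_ne_zero y)
    (fun i _ => (hf i).differentiable_deriv_two y)
    (fun i _ => (hfσ i).differentiable two_ne_zero y)
    (fun i _ => (hfσ i).differentiable_deriv_two y)
    (fun i _ => by linear_combination heqf i y)
    (fun i _ => by linear_combination heqfσ i y)).deriv
end
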